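/- Let d = (d_1, …, d_n) be a graphical degree sequence with d_min ≥ 1 and 3 ≤ d_max ≤ (1/3)·√M, and let Z ∈ Ω(d). Then for every pair (p,q) with p + q = 4, p ∈ {1,2} and q ∈ {2,3}, one has |C(p,q)| ≤ 2·d_max^2·M·|C(p−1, q−1)|, where C(p,q) is the set of good encodings consistent with Z having exactly p 2-defect edges and exactly q (−1)-defect edges. -/

import Mathlib

/-!
Write `D = d_max`. The bound is a double count of switchings that turn an encoding `L ∈ C(p, q)`
into one in `C(p − 1, q − 1)` by removing a 2-defect edge `ab` and a (−1)-defect edge `bc`.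

When all four defects are present, each of the five configurations contains a vertex `b` on exactly
two (−1)-defect edges and on a 2-defect edge `ab`, so there are two choices of `c`
(`exists_corners`). Goodness gives `c` at least two neighbours `x` along edges labelled 1
(`two_le_nl_one`). If `x ≠ a` and `ax` has label 0, switching along the closed walk `a b c x` works
(`sw4`). Otherwise the switching follows a longer closed walk `a b c x y z` with `yz` labelled 1 and
`xy`, `za` labelled 0 (`sw6`); there are at least `K = M − (2D² + 7D + 10)` such pairs `(z, y)`
(`good_pairs`). Short switchings get weight `K` and long ones weight 1, so every `L` has total
forward weight at least `2 · 2 · K` (`forward_total`). Both kinds produce good encodings consistent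
with `Z` (`Reduces.mem`), since no new defect is created.

A switching can be undone once its vertices are known, so it remains to count, for a given result,
the vertex tuples it can have come from. In the result `b` lies on exactly one (−1)-defect edge and
is one of at most four vertices, `a` is one of at most `D + 1` neighbours of `b`, and `c` is left
free. This gives at most `4 (D + 1) D n` short tuples (`card_rev4`) and `4 (D + 1) D² (D + 2) n` long
ones (`card_rev6`). Hence `4 K |C(p, q)|` is at most
`4 n ((D + 1) D K + (D + 1) D² (D + 2)) |C(p − 1, q − 1)|`. As `M ≥ 9 D²` yields
`K ≥ 7 D² − 7 D − 10`, the bracket is at most `2 D² K`, and `n ≤ M` finishes the proof.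
-/


open scoped Classical

noncomputable section

namespace SwitchChain

variable {n : ℕ}

/-- `Omega d` is the set of simple graphs on `[n] = Fin n` with degree sequence `d`. -/
def Omega (d : Fin n → ℕ) : Set (SimpleGraph (Fin n)) :=
  {G | ∀ v, {w | G.Adj v w}.ncard = d v}

/-- `M d` is the sum of the degrees. -/
def M (d : Fin n → ℕ) : ℕ := ∑ j, d j

/-- The maximum degree. -/
def dmax (d : Fin n → ℕ) : ℕ := Finset.univ.sup d

/-- An encoding for the degree sequence `d`: a symmetric integer matrix with zero
diagonal, entries in `{-1, 0, 1, 2}`, and row sums `d`. -/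
def IsEncoding (d : Fin n → ℕ) (L : Matrix (Fin n) (Fin n) ℤ) : Prop :=
  (∀ i j, L i j = L j i) ∧ (∀ i, L i i = 0) ∧
  (∀ i j, L i j = -1 ∨ L i j = 0 ∨ L i j = 1 ∨ L i j = 2) ∧
  (∀ i, ∑ j, L i j = (d i : ℤ))

/-- The set of (unordered) edges of `L` carrying the label `c`. -/
def labelEdges (L : Matrix (Fin n) (Fin n) ℤ) (c : ℤ) : Set (Sym2 (Fin n)) :=
  {e | ∃ x y : Fin n, e = s(x, y) ∧ x ≠ y ∧ L x y = c}

/-- Every defect edge of `L` occurs, with its label, in the labelled edge set `D`. -/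
def DefectsWithin (L : Matrix (Fin n) (Fin n) ℤ) (D : Set (Sym2 (Fin n) × ℤ)) : Prop :=
  ∀ x y : Fin n, x ≠ y → (L x y = 2 ∨ L x y = -1) → (s(x, y), L x y) ∈ D

/-- A valid encoding: at most four defect edges, forming a labelled subgraph of one
of the five possible configurations. -/
def ValidEncoding (d : Fin n → ℕ) (L : Matrix (Fin n) (Fin n) ℤ) : Prop :=
  IsEncoding d L ∧
  (labelEdges L 2).ncard + (labelEdges L (-1)).ncard ≤ 4 ∧
  ∃ (a b c u e f : Fin n) (ℓ : ℤ), (ℓ = -1 ∨ ℓ = 2) ∧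
    (([a, b, c, u].Pairwise (· ≠ ·) ∧ e ≠ f ∧
        e ∉ ({a, b, c, u} : Set (Fin n)) ∧ f ∉ ({a, b, c, u} : Set (Fin n)) ∧
        DefectsWithin L {(s(a, b), 2), (s(b, c), -1), (s(b, u), -1), (s(e, f), ℓ)}) ∨
     ([a, b, c, u, e].Pairwise (· ≠ ·) ∧
        DefectsWithin L {(s(a, b), 2), (s(b, c), -1), (s(b, u), -1), (s(u, e), ℓ)}) ∨
     ([a, b, c, u, e].Pairwise (· ≠ ·) ∧
        DefectsWithin L {(s(a, b), -1), (s(b, c), -1), (s(b, u), 2), (s(u, e), ℓ)}) ∨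
     ([a, b, c, u].Pairwise (· ≠ ·) ∧
        DefectsWithin L {(s(a, b), -1), (s(b, c), -1), (s(b, u), 2), (s(u, c), ℓ)}) ∨
     ([a, b, c, u].Pairwise (· ≠ ·) ∧
        DefectsWithin L {(s(a, b), 2), (s(b, c), -1), (s(b, u), -1), (s(u, c), ℓ)}))

/-- A good encoding: a valid encoding satisfying the degree conditions of
Lemma 2.3. -/
def GoodEncoding (d : Fin n → ℕ) (L : Matrix (Fin n) (Fin n) ℤ) : Prop :=
  ValidEncoding d L ∧
  (∀ x y : Fin n, x ≠ y → L x y = 2 → 2 ≤ d x ∧ 2 ≤ d y) ∧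
  (∀ x y z : Fin n, x ≠ y → y ≠ z → x ≠ z → L x y = 2 → L y z = 2 → 4 ≤ d y) ∧
  (∀ x y z : Fin n, x ≠ y → y ≠ z → x ≠ z → L x y = 2 → L y z = -1 → 3 ≤ d y)

/-- The 0-1 adjacency matrix of a simple graph, over `ℤ`. -/
def adjMat (Z : SimpleGraph (Fin n)) : Matrix (Fin n) (Fin n) ℤ :=
  fun i j => if Z.Adj i j then 1 else 0

/-- `L` is consistent with `Z` if every entry of `L + Z` lies in `{0, 1, 2}`. -/
def ConsistentWith (L : Matrix (Fin n) (Fin n) ℤ) (Z : SimpleGraph (Fin n)) : Prop :=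
  ∀ i j, L i j + adjMat Z i j = 0 ∨ L i j + adjMat Z i j = 1 ∨ L i j + adjMat Z i j = 2


/-- `C(p,q)`: the set of good encodings consistent with `Z` having exactly `p`
2-defect edges and exactly `q` (−1)-defect edges. -/
def Cset (d : Fin n → ℕ) (Z : SimpleGraph (Fin n)) (p q : ℕ) :
    Set (Matrix (Fin n) (Fin n) ℤ) :=
  {L | GoodEncoding d L ∧ ConsistentWith L Z ∧
    (labelEdges L 2).ncard = p ∧ (labelEdges L (-1)).ncard = q}

/-! ### Label counts -/

/-- `nl L l v` is the number of neighbours of `v` along edges labelled `l`. -/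
def nl (L : Matrix (Fin n) (Fin n) ℤ) (l : ℤ) (v : Fin n) : ℕ :=
  (Finset.univ.filter fun w => L v w = l).card

/-- The simple graph formed by the edges labelled `l` of a symmetric matrix. -/
def lg (L : Matrix (Fin n) (Fin n) ℤ) (hL : ∀ i j, L i j = L j i) (l : ℤ) :
    SimpleGraph (Fin n) where
  Adj x y := x ≠ y ∧ L x y = l
  symm := ⟨fun x y h => ⟨h.1.symm, by rw [hL]; exact h.2⟩⟩
  loopless := ⟨fun x h => h.1 rfl⟩

lemma lg_degree {L : Matrix (Fin n) (Fin n) ℤ} (hL : ∀ i j, L i j = L j i)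
    (h0 : ∀ i, L i i = 0) {l : ℤ} (hl : l ≠ 0) (v : Fin n) :
    (lg L hL l).degree v = nl L l v := by
  rw [← SimpleGraph.card_neighborFinset_eq_degree, nl]
  congr 1
  ext w
  rw [SimpleGraph.mem_neighborFinset]
  simp only [Finset.mem_filter, Finset.mem_univ, true_and]
  constructor
  · exact fun h => h.2
  · intro h
    refine ⟨?_, h⟩
    rintro rfl
    exact hl (h ▸ h0 v)

lemma lg_edgeSet {L : Matrix (Fin n) (Fin n) ℤ} (hL : ∀ i j, L i j = L j i) (l : ℤ) :
    (lg L hL l).edgeSet = labelEdges L l := by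
  ext e
  induction e with | _ x y =>
  simp only [SimpleGraph.mem_edgeSet, lg, labelEdges, Set.mem_ofPred_eq]
  constructor
  · exact fun h => ⟨x, y, rfl, h.1, h.2⟩
  · rintro ⟨x', y', he, hne, h⟩
    rcases Sym2.eq_iff.1 he with ⟨rfl, rfl⟩ | ⟨rfl, rfl⟩
    · exact ⟨hne, h⟩
    · exact ⟨hne.symm, by rw [hL]; exact h⟩

lemma lg_card {L : Matrix (Fin n) (Fin n) ℤ} (hL : ∀ i j, L i j = L j i) (l : ℤ) :
    (lg L hL l).edgeFinset.card = (labelEdges L l).ncard := by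
  rw [← lg_edgeSet hL, ← SimpleGraph.coe_edgeFinset, Set.ncard_coe_finset]

lemma sum_nl {L : Matrix (Fin n) (Fin n) ℤ} (hL : ∀ i j, L i j = L j i)
    (h0 : ∀ i, L i i = 0) {l : ℤ} (hl : l ≠ 0) :
    ∑ v, nl L l v = 2 * (labelEdges L l).ncard := by
  rw [← lg_card hL, ← SimpleGraph.sum_degrees_eq_twice_card_edges]
  exact Finset.sum_congr rfl fun v _ => (lg_degree hL h0 hl v).symm

/-- Edges labelled `l` that avoid `v` do not contribute to the number of `l`-neighbours of `v`. -/
lemma nl_add_le {L : Matrix (Fin n) (Fin n) ℤ} (hL : ∀ i j, L i j = L j i)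
    (h0 : ∀ i, L i i = 0) {l : ℤ} (hl : l ≠ 0) (v : Fin n) (F : Finset (Sym2 (Fin n)))
    (hF : ∀ e ∈ F, e ∈ labelEdges L l ∧ v ∉ e) :
    nl L l v + F.card ≤ (labelEdges L l).ncard := by
  rw [← lg_degree hL h0 hl, ← SimpleGraph.card_incidenceFinset_eq_degree, ← lg_card hL,
    ← Finset.card_union_of_disjoint]
  · apply Finset.card_le_card
    intro e he
    rcases Finset.mem_union.1 he with h | h
    · exact (SimpleGraph.incidenceFinset_subset _ _) h
    · rw [SimpleGraph.mem_edgeFinset, lg_edgeSet]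
      exact (hF e h).1
  · rw [Finset.disjoint_left]
    intro e he hf
    rw [SimpleGraph.mem_incidenceFinset] at he
    exact (hF e hf).2 he.2

lemma mem_labelEdges {L : Matrix (Fin n) (Fin n) ℤ} (h0 : ∀ i, L i i = 0) {l : ℤ} (hl : l ≠ 0)
    {x y : Fin n} (h : L x y = l) : s(x, y) ∈ labelEdges L l :=
  ⟨x, y, rfl, by rintro rfl; exact hl (h ▸ h0 x), h⟩

/-- The row sum of an encoding in terms of its label counts. -/
lemma row_eq {d : Fin n → ℕ} {L : Matrix (Fin n) (Fin n) ℤ} (h : IsEncoding d L) (v : Fin n) :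
    nl L 1 v + 2 * nl L 2 v = d v + nl L (-1) v := by
  obtain ⟨-, -, h3, h4⟩ := h
  have h5 : ∀ w, L v w = (if L v w = 1 then (1 : ℤ) else 0) + 2 * (if L v w = 2 then (1 : ℤ) else 0)
      - (if L v w = -1 then (1 : ℤ) else 0) := by
    intro w
    rcases h3 v w with h | h | h | h <;> simp [h]
  have h6 := h4 v
  rw [Finset.sum_congr rfl fun w _ => h5 w] at h6
  rw [Finset.sum_sub_distrib, Finset.sum_add_distrib, ← Finset.mul_sum, Finset.sum_boole,
    Finset.sum_boole, Finset.sum_boole] at h6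
  unfold nl
  omega

lemma nonzero_card {d : Fin n → ℕ} {L : Matrix (Fin n) (Fin n) ℤ} (h : IsEncoding d L)
    (v : Fin n) :
    (Finset.univ.filter fun w => w = v ∨ L v w ≠ 0).card
      ≤ 1 + nl L 1 v + nl L 2 v + nl L (-1) v := by
  have : (Finset.univ.filter fun w => w = v ∨ L v w ≠ 0) ⊆ {v} ∪
      (Finset.univ.filter fun w => L v w = 1) ∪ (Finset.univ.filter fun w => L v w = 2) ∪
      (Finset.univ.filter fun w => L v w = -1) := by
    intro w hw
    have := h.2.2.1 v w
    simp only [Finset.mem_filter, Finset.mem_univ, true_and, Finset.mem_union,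
      Finset.mem_singleton] at hw ⊢
    tauto
  refine (Finset.card_le_card this).trans ((Finset.card_union_le _ _).trans ?_)
  refine Nat.add_le_add_right ((Finset.card_union_le _ _).trans ?_) _
  refine Nat.add_le_add_right ((Finset.card_union_le _ _).trans ?_) _
  simp [nl]

/-- The number of ordered pairs labelled `1` that start in `S`. -/
lemma pairs_card (L : Matrix (Fin n) (Fin n) ℤ) (S : Finset (Fin n)) :
    (Finset.univ.filter fun w : Fin n × Fin n => w.1 ∈ S ∧ L w.1 w.2 = 1).card
      = ∑ y ∈ S, nl L 1 y := by
  have : (Finset.univ.filter fun w : Fin n × Fin n => w.1 ∈ S ∧ L w.1 w.2 = 1).card =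
      (S.sigma fun y => Finset.univ.filter fun w => L y w = 1).card := by
    apply Finset.card_bij' (fun w _ => ⟨w.1, w.2⟩) (fun w _ => (w.1, w.2)) <;> simp
  rw [this, Finset.card_sigma]
  rfl

lemma le_dmax (d : Fin n → ℕ) (v : Fin n) : d v ≤ dmax d :=
  Finset.le_sup (f := d) (Finset.mem_univ v)

lemma sum_nl_one_le {d : Fin n → ℕ} {L : Matrix (Fin n) (Fin n) ℤ} (h : IsEncoding d L)
    (S : Finset (Fin n)) :
    ∑ y ∈ S, nl L 1 y ≤ S.card * dmax d + 2 * (labelEdges L (-1)).ncard := by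
  calc ∑ y ∈ S, nl L 1 y ≤ ∑ y ∈ S, (dmax d + nl L (-1) y) := by
        apply Finset.sum_le_sum
        intro y _
        have := row_eq h y
        have := le_dmax d y
        omega
    _ = S.card * dmax d + ∑ y ∈ S, nl L (-1) y := by
        rw [Finset.sum_add_distrib]; simp
    _ ≤ _ := by
        rw [← sum_nl h.1 h.2.1 (l := -1) (by norm_num)]
        exact Nat.add_le_add_left (Finset.sum_le_sum_of_subset (Finset.subset_univ S)) _

lemma sum_nl_one {d : Fin n → ℕ} {L : Matrix (Fin n) (Fin n) ℤ} (h : IsEncoding d L) :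
    ∑ y, nl L 1 y + 4 * (labelEdges L 2).ncard = M d + 2 * (labelEdges L (-1)).ncard := by
  have h2 := sum_nl h.1 h.2.1 (l := 2) (by norm_num)
  have h3 := sum_nl h.1 h.2.1 (l := -1) (by norm_num)
  have h4 : ∑ y, (nl L 1 y + 2 * nl L 2 y) = ∑ y, (d y + nl L (-1) y) :=
    Finset.sum_congr rfl fun y _ => row_eq h y
  rw [Finset.sum_add_distrib, Finset.sum_add_distrib, ← Finset.mul_sum] at h4
  unfold M
  omega

/-! ### The distinguished vertex of a valid encoding with four defects -/

/-- `Corner L a b c`: a 2-defect edge `ab` meets a (−1)-defect edge `bc` at a vertex `b`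
lying on exactly two (−1)-defect edges. -/
def Corner (L : Matrix (Fin n) (Fin n) ℤ) (a b c : Fin n) : Prop :=
  L a b = 2 ∧ L b c = -1 ∧ nl L (-1) b = 2

/-- With four defects, the defect graph is the whole configuration. -/
lemma all_defects {L : Matrix (Fin n) (Fin n) ℤ}
    (h4 : (labelEdges L 2).ncard + (labelEdges L (-1)).ncard = 4)
    {t₁ t₂ t₃ t₄ : Sym2 (Fin n) × ℤ} (hD : DefectsWithin L {t₁, t₂, t₃, t₄}) :
    ∀ t ∈ ({t₁, t₂, t₃, t₄} : Set (Sym2 (Fin n) × ℤ)), t.1 ∈ labelEdges L t.2 := by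
  set D : Set (Sym2 (Fin n) × ℤ) := {t₁, t₂, t₃, t₄} with hDdef
  set S : Set (Sym2 (Fin n) × ℤ) :=
    (fun e => (e, (2 : ℤ))) '' labelEdges L 2 ∪ (fun e => (e, (-1 : ℤ))) '' labelEdges L (-1)
    with hS
  have hfin : ∀ l, (labelEdges L l).Finite := fun l => Set.toFinite _
  have hScard : S.ncard = 4 := by
    rw [hS, Set.ncard_union_eq _ ((hfin _).image _) ((hfin _).image _),
      Set.ncard_image_of_injective, Set.ncard_image_of_injective, h4]
    · intro x y h; exact (Prod.mk.inj h).1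
    · intro x y h; exact (Prod.mk.inj h).1
    · rw [Set.disjoint_left]
      rintro _ ⟨e, -, rfl⟩ ⟨e', -, h⟩
      have := (Prod.mk.inj h).2
      norm_num at this
  have hSD : S ⊆ D := by
    rintro _ (⟨e, ⟨x, y, rfl, hne, h⟩, rfl⟩ | ⟨e, ⟨x, y, rfl, hne, h⟩, rfl⟩)
    · have := hD x y hne (Or.inl h)
      rwa [h] at this
    · have := hD x y hne (Or.inr h)
      rwa [h] at this
  have hDfin : D.Finite := by simp [hDdef]
  have hDcard : D.ncard ≤ 4 := by
    rw [hDdef]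
    refine (Set.ncard_insert_le _ _).trans (Nat.succ_le_succ ?_)
    refine (Set.ncard_insert_le _ _).trans (Nat.succ_le_succ ?_)
    refine (Set.ncard_insert_le _ _).trans (Nat.succ_le_succ ?_)
    simp
  have hEq : S = D := Set.eq_of_subset_of_ncard_le hSD (by omega) hDfin
  intro t ht
  rw [← hEq] at ht
  rcases ht with ⟨e, he, rfl⟩ | ⟨e, he, rfl⟩ <;> exact he

lemma eq_of_mem_labelEdges {L : Matrix (Fin n) (Fin n) ℤ} (hL : ∀ i j, L i j = L j i) {l : ℤ}
    {x y : Fin n} (h : s(x, y) ∈ labelEdges L l) : L x y = l := by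
  rw [← lg_edgeSet hL] at h
  exact h.2

lemma nl_eq_two {L : Matrix (Fin n) (Fin n) ℤ} {b c u : Fin n} (hcu : c ≠ u)
    (hc : L b c = -1) (hu : L b u = -1) (h : ∀ v, L b v = -1 → v = c ∨ v = u) :
    nl L (-1) b = 2 := by
  have : (Finset.univ.filter fun w => L b w = -1) = {c, u} := by
    ext w
    simp only [Finset.mem_filter, Finset.mem_univ, true_and, Finset.mem_insert,
      Finset.mem_singleton]
    constructor
    · exact h w
    · rintro (rfl | rfl) <;> assumption
  rw [nl, this, Finset.card_pair hcu]

/-- In each of the five configurations with all four defects present, the 2-defect edge `ab` and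
the two (−1)-defect edges at `b` give two corners; the fourth defect edge avoids `b`. -/
lemma exists_corners {d : Fin n → ℕ} {L : Matrix (Fin n) (Fin n) ℤ} (hv : ValidEncoding d L)
    (h4 : (labelEdges L 2).ncard + (labelEdges L (-1)).ncard = 4) :
    ∃ a b c c', c ≠ c' ∧ Corner L a b c ∧ Corner L a b c' := by
  obtain ⟨⟨hL, h0, -, -⟩, -, a, b, c, u, e, f, ℓ, hℓ, h⟩ := hv
  have key : ∀ (a b c u : Fin n) (t : Sym2 (Fin n) × ℤ)
      (D : Set (Sym2 (Fin n) × ℤ)), [a, b, c, u].Pairwise (· ≠ ·) → b ∉ t.1 →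
      (∀ t' ∈ D, t'.1 ∈ labelEdges L t'.2) → (s(a, b), 2) ∈ D → (s(b, c), -1) ∈ D →
      (s(b, u), -1) ∈ D → DefectsWithin L D →
      (∀ t' ∈ D, t' = (s(a, b), 2) ∨ t' = (s(b, c), -1) ∨ t' = (s(b, u), -1) ∨ t' = t) →
      ∃ a b c c', c ≠ c' ∧ Corner L a b c ∧ Corner L a b c' := by
    intro a b c u t D hp hb hD h1 h2 h3 hDW hDsub
    have e1 := eq_of_mem_labelEdges hL (hD _ h1)
    have e2 := eq_of_mem_labelEdges hL (hD _ h2)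
    have e3 := eq_of_mem_labelEdges hL (hD _ h3)
    simp only [List.pairwise_cons, List.mem_cons, List.not_mem_nil, or_false] at hp
    have hcu : c ≠ u := hp.2.2.1 u rfl
    have hq : nl L (-1) b = 2 := by
      refine nl_eq_two hcu e2 e3 ?_
      intro v hv
      have hbv : b ≠ v := by
        rintro rfl
        rw [h0] at hv
        norm_num at hv
      have hm := hDsub _ (hDW b v hbv (Or.inr hv))
      rw [hv] at hm
      rcases hm with hm | hm | hm | hm
      · have := (Prod.mk.inj hm).2
        norm_num at this
      · left
        exact Sym2.congr_right.1 (Prod.mk.inj hm).1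
      · right
        exact Sym2.congr_right.1 (Prod.mk.inj hm).1
      · exfalso
        apply hb
        rw [← hm]
        simp
    exact ⟨a, b, c, u, hcu, ⟨e1, e2, hq⟩, ⟨e1, e3, hq⟩⟩
  rcases h with ⟨hp, hef, he, hf, hD⟩ | ⟨hp, hD⟩ | ⟨hp, hD⟩ | ⟨hp, hD⟩ | ⟨hp, hD⟩
  · exact key a b c u (s(e, f), ℓ) _ hp (by simp at he hf ⊢; grind) (all_defects h4 hD)
      (by simp) (by simp) (by simp) hD (by simp)
  · exact key a b c u (s(u, e), ℓ) _ (by simp at hp ⊢; grind) (by simp at hp ⊢; grind)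
      (all_defects h4 hD) (by simp) (by simp) (by simp) hD (by simp)
  · exact key u b a c (s(u, e), ℓ) _ (by simp at hp ⊢; grind) (by simp at hp ⊢; grind)
      (all_defects h4 hD) (by simp [Sym2.eq_swap]) (by simp [Sym2.eq_swap])
      (by simp) hD (by simp [Sym2.eq_swap])
  · exact key u b a c (s(u, c), ℓ) _ (by simp at hp ⊢; grind) (by simp at hp ⊢; grind)
      (all_defects h4 hD) (by simp [Sym2.eq_swap]) (by simp [Sym2.eq_swap])
      (by simp) hD (by simp [Sym2.eq_swap])
  · exact key a b c u (s(u, c), ℓ) _ hp (by simp at hp ⊢; grind) (all_defects h4 hD)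
      (by simp) (by simp) (by simp) hD (by simp)

/-! ### Switchings -/

/-- The indicator of an unordered pair. -/
def ind (e f : Sym2 (Fin n)) : ℤ := if e = f then 1 else 0

lemma sum_ind (i u v : Fin n) (h : u ≠ v) :
    ∑ j, ind s(i, j) s(u, v) = (if i = u then (1 : ℤ) else 0) + (if i = v then (1 : ℤ) else 0) := by
  unfold ind
  by_cases h1 : i = u
  · subst h1
    simp [h]
  · by_cases h2 : i = v
    · subst h2
      simp [h1]
    · simp [h1, h2]

/-- `Reduces L L' a b c`: `L'` has the row sums of `L`, the defects `ab` (label 2) and `bc`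
(label −1) have become ordinary entries, and no other defect is created or destroyed. -/
structure Reduces (L L' : Matrix (Fin n) (Fin n) ℤ) (a b c : Fin n) : Prop where
  symm : ∀ i j, L' i j = L' j i
  diag : ∀ i, L' i i = 0
  row : ∀ i, ∑ j, L' i j = ∑ j, L i j
  low : ∀ i j, L i j = 0 ∨ L i j = 1 → L' i j = 0 ∨ L' i j = 1
  hab : L' a b = 1
  hbc : L' b c = 0
  keep : ∀ i j, s(i, j) ≠ s(a, b) → s(i, j) ≠ s(b, c) → (L i j = 2 ∨ L i j = -1) →
    L' i j = L i j

lemma val_of_eq {L : Matrix (Fin n) (Fin n) ℤ} (hL : ∀ i j, L i j = L j i) {i j u v : Fin n}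
    (h : s(i, j) = s(u, v)) : L i j = L u v := by
  rcases Sym2.eq_iff.1 h with ⟨rfl, rfl⟩ | ⟨rfl, rfl⟩
  · rfl
  · exact hL _ _

section
variable {d : Fin n → ℕ} {L L' : Matrix (Fin n) (Fin n) ℤ} {a b c : Fin n}

lemma Reduces.cases (hr : Reduces L L' a b c) (hE : IsEncoding d L) (hc : Corner L a b c)
    (i j : Fin n) :
    (s(i, j) = s(a, b) ∧ L i j = 2 ∧ L' i j = 1) ∨ (s(i, j) = s(b, c) ∧ L i j = -1 ∧ L' i j = 0) ∨
    (s(i, j) ≠ s(a, b) ∧ s(i, j) ≠ s(b, c) ∧ (L i j = 2 ∨ L i j = -1) ∧ L' i j = L i j) ∨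
    ((L i j = 0 ∨ L i j = 1) ∧ (L' i j = 0 ∨ L' i j = 1)) := by
  by_cases h1 : s(i, j) = s(a, b)
  · exact Or.inl ⟨h1, (val_of_eq hE.1 h1).trans hc.1, (val_of_eq hr.symm h1).trans hr.hab⟩
  by_cases h2 : s(i, j) = s(b, c)
  · exact Or.inr (Or.inl ⟨h2, (val_of_eq hE.1 h2).trans hc.2.1,
      (val_of_eq hr.symm h2).trans hr.hbc⟩)
  rcases hE.2.2.1 i j with h | h | h | h
  · exact Or.inr (Or.inr (Or.inl ⟨h1, h2, Or.inr h, hr.keep i j h1 h2 (Or.inr h)⟩))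
  · exact Or.inr (Or.inr (Or.inr ⟨Or.inl h, hr.low i j (Or.inl h)⟩))
  · exact Or.inr (Or.inr (Or.inr ⟨Or.inr h, hr.low i j (Or.inr h)⟩))
  · exact Or.inr (Or.inr (Or.inl ⟨h1, h2, Or.inl h, hr.keep i j h1 h2 (Or.inl h)⟩))

lemma Reduces.two (hr : Reduces L L' a b c) (hE : IsEncoding d L) (hc : Corner L a b c)
    (i j : Fin n) : L' i j = 2 ↔ L i j = 2 ∧ s(i, j) ≠ s(a, b) := by
  rcases hr.cases hE hc i j with ⟨h1, h2, h3⟩ | ⟨h1, h2, h3⟩ | ⟨h0, h1, h2, h3⟩ | ⟨h1, h2⟩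
  · simp [h1, h3]
  · simp [h2, h3]
  · simp [h0, h3]
  · constructor <;> intro h <;> omega

lemma Reduces.neg (hr : Reduces L L' a b c) (hE : IsEncoding d L) (hc : Corner L a b c)
    (i j : Fin n) : L' i j = -1 ↔ L i j = -1 ∧ s(i, j) ≠ s(b, c) := by
  rcases hr.cases hE hc i j with ⟨h1, h2, h3⟩ | ⟨h1, h2, h3⟩ | ⟨h0, h1, h2, h3⟩ | ⟨h1, h2⟩
  · simp [h2, h3]
  · simp [h1, h3]
  · simp [h1, h3]
  · constructor <;> intro h <;> omega

/-- Deleting defects preserves validity, goodness and consistency. -/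
lemma Reduces.mem {Z : SimpleGraph (Fin n)} {p q : ℕ} (hr : Reduces L L' a b c)
    (hc : Corner L a b c) (hL : L ∈ Cset d Z p q) : L' ∈ Cset d Z (p - 1) (q - 1) := by
  obtain ⟨⟨⟨hE, h4, A, B, C, U, E, F, ℓ, hℓ, hconf⟩, g1, g2, g3⟩, hcons, hp, hq⟩ := hL
  have two := hr.two hE hc
  have neg := hr.neg hE hc
  have e2 : labelEdges L' 2 = labelEdges L 2 \ {s(a, b)} := by
    ext e
    constructor
    · rintro ⟨x, y, rfl, hne, h⟩
      exact ⟨⟨x, y, rfl, hne, ((two x y).1 h).1⟩, ((two x y).1 h).2⟩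
    · rintro ⟨⟨x, y, rfl, hne, h⟩, h'⟩
      exact ⟨x, y, rfl, hne, (two x y).2 ⟨h, h'⟩⟩
  have e1 : labelEdges L' (-1) = labelEdges L (-1) \ {s(b, c)} := by
    ext e
    constructor
    · rintro ⟨x, y, rfl, hne, h⟩
      exact ⟨⟨x, y, rfl, hne, ((neg x y).1 h).1⟩, ((neg x y).1 h).2⟩
    · rintro ⟨⟨x, y, rfl, hne, h⟩, h'⟩
      exact ⟨x, y, rfl, hne, (neg x y).2 ⟨h, h'⟩⟩
  have p2 : (labelEdges L' 2).ncard = p - 1 := by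
    rw [e2, Set.ncard_sdiff_singleton_of_mem (mem_labelEdges hE.2.1 (by norm_num) hc.1), hp]
  have q2 : (labelEdges L' (-1)).ncard = q - 1 := by
    rw [e1, Set.ncard_sdiff_singleton_of_mem (mem_labelEdges hE.2.1 (by norm_num) hc.2.1), hq]
  have hE' : IsEncoding d L' := by
    refine ⟨hr.symm, hr.diag, ?_, fun i => (hr.row i).trans (hE.2.2.2 i)⟩
    intro i j
    rcases hr.cases hE hc i j with ⟨h1, h2, h3⟩ | ⟨h1, h2, h3⟩ | ⟨h0, h1, h2, h3⟩ | ⟨h1, h2⟩ <;>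
      omega
  have hDW : ∀ D, DefectsWithin L D → DefectsWithin L' D := by
    intro D hD x y hne h
    have hLL : L' x y = L x y := by
      rcases h with h | h
      · rw [h, ((two x y).1 h).1]
      · rw [h, ((neg x y).1 h).1]
    rw [hLL] at h ⊢
    exact hD x y hne h
  refine ⟨⟨⟨hE', by omega, A, B, C, U, E, F, ℓ, hℓ, ?_⟩, ?_, ?_, ?_⟩, ?_, p2, q2⟩
  · rcases hconf with ⟨h1, h2, h3, h4, h5⟩ | ⟨h1, h2⟩ | ⟨h1, h2⟩ | ⟨h1, h2⟩ | ⟨h1, h2⟩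
    · exact Or.inl ⟨h1, h2, h3, h4, hDW _ h5⟩
    · exact Or.inr (Or.inl ⟨h1, hDW _ h2⟩)
    · exact Or.inr (Or.inr (Or.inl ⟨h1, hDW _ h2⟩))
    · exact Or.inr (Or.inr (Or.inr (Or.inl ⟨h1, hDW _ h2⟩)))
    · exact Or.inr (Or.inr (Or.inr (Or.inr ⟨h1, hDW _ h2⟩)))
  · exact fun x y hxy h => g1 x y hxy ((two x y).1 h).1
  · exact fun x y z hxy hyz hxz h h' => g2 x y z hxy hyz hxz ((two x y).1 h).1 ((two y z).1 h').1
  · exact fun x y z hxy hyz hxz h h' => g3 x y z hxy hyz hxz ((two x y).1 h).1 ((neg y z).1 h').1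
  · intro i j
    have hij := hcons i j
    have hZ : adjMat Z i j = 0 ∨ adjMat Z i j = 1 := by
      unfold adjMat
      split_ifs <;> simp
    rcases hr.cases hE hc i j with ⟨h1, h2, h3⟩ | ⟨h1, h2, h3⟩ | ⟨h0, h1, h2, h3⟩ | ⟨h1, h2⟩ <;>
      omega

/-- No vertex gains (−1)-defect edges under a reduction. -/
lemma Reduces.nl_neg_le (hr : Reduces L L' a b c) (hE : IsEncoding d L) (hc : Corner L a b c)
    (v : Fin n) : nl L' (-1) v ≤ nl L (-1) v := by
  apply Finset.card_le_card
  intro w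
  simp only [Finset.mem_filter, Finset.mem_univ, true_and]
  exact fun h => ((hr.neg hE hc v w).1 h).1

lemma Reduces.nl_neg_b (hr : Reduces L L' a b c) (hE : IsEncoding d L) (hc : Corner L a b c) :
    nl L' (-1) b = 1 := by
  have : (Finset.univ.filter fun w => L' b w = -1) =
      (Finset.univ.filter fun w => L b w = -1).erase c := by
    ext w
    simp only [Finset.mem_filter, Finset.mem_univ, true_and, Finset.mem_erase]
    rw [hr.neg hE hc, Ne, Sym2.congr_right, and_comm]
  have h2 := hc.2.2
  unfold nl at h2 ⊢
  rw [this, Finset.card_erase_of_mem (by simpa using hc.2.1), h2]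

end

/-- The switching along the closed walk `a b c x`: entries are alternately lowered and raised by 1
along its edges, starting with `ab` lowered, so row sums are preserved. -/
def sw4 (L : Matrix (Fin n) (Fin n) ℤ) (b a x c : Fin n) : Matrix (Fin n) (Fin n) ℤ :=
  fun i j => L i j - ind s(i, j) s(a, b) + ind s(i, j) s(b, c) - ind s(i, j) s(c, x)
    + ind s(i, j) s(x, a)

/-- The switching along the closed walk `a b c x y z`, with the sign convention of `sw4`. The walk
may revisit a vertex (`x = a` is allowed); only its edges need to be distinct. -/
def sw6 (L : Matrix (Fin n) (Fin n) ℤ) (b a x z y c : Fin n) : Matrix (Fin n) (Fin n) ℤ :=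
  fun i j => L i j - ind s(i, j) s(a, b) + ind s(i, j) s(b, c) - ind s(i, j) s(c, x)
    + ind s(i, j) s(x, y) - ind s(i, j) s(y, z) + ind s(i, j) s(z, a)

/-- The tuples `(b, a, x, c)` along which `sw4` reduces `L`. -/
def Fwd4 (L : Matrix (Fin n) (Fin n) ℤ) (b a x c : Fin n) : Prop :=
  Corner L a b c ∧ L c x = 1 ∧ x ≠ a ∧ L a x = 0

/-- The tuples `(b, a, x, z, y, c)` to which `sw6` is applied: `sw4` is not available, that is,
`x` equals `a` or is joined to it. -/
def Fwd6 (L : Matrix (Fin n) (Fin n) ℤ) (b a x z y c : Fin n) : Prop :=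
  Corner L a b c ∧ L c x = 1 ∧ (x = a ∨ L a x ≠ 0) ∧
    L y z = 1 ∧ y ≠ x ∧ L x y = 0 ∧ z ≠ a ∧ L a z = 0

lemma ne_of_val {L : Matrix (Fin n) (Fin n) ℤ} {x y : Fin n} (h0 : ∀ i, L i i = 0)
    (h : L x y ≠ 0) : x ≠ y := by
  rintro rfl
  exact h (h0 x)

lemma sw4_val {L : Matrix (Fin n) (Fin n) ℤ} (hs : ∀ i j, L i j = L j i)
    {b a x c : Fin n} (h : Fwd4 L b a x c) (i j : Fin n) :
    (s(i, j) = s(a, b) → L i j = 2) ∧ (s(i, j) = s(b, c) → L i j = -1) ∧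
    (s(i, j) = s(c, x) → L i j = 1) ∧ (s(i, j) = s(x, a) → L i j = 0) := by
  obtain ⟨⟨h1, h2, -⟩, h3, h4, h5⟩ := h
  refine ⟨?_, ?_, ?_, ?_⟩ <;> intro he <;> rw [val_of_eq hs he]
  · exact h1
  · exact h2
  · exact h3
  · rw [hs]; exact h5

lemma sw4_reduces {d : Fin n → ℕ} {L : Matrix (Fin n) (Fin n) ℤ} (hE : IsEncoding d L)
    {b a x c : Fin n} (h : Fwd4 L b a x c) : Reduces L (sw4 L b a x c) a b c := by
  have hv := sw4_val hE.1 h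
  obtain ⟨⟨h1, h2, -⟩, h3, h4, h5⟩ := h
  have hs := hE.1
  have h0 := hE.2.1
  have nab : a ≠ b := ne_of_val h0 (by omega)
  have nbc : b ≠ c := ne_of_val h0 (by omega)
  have ncx : c ≠ x := ne_of_val h0 (by omega)
  refine ⟨?_, ?_, ?_, ?_, ?_, ?_, ?_⟩
  · intro i j
    simp only [sw4]
    rw [hs i j, Sym2.eq_swap]
  · intro i
    have hd : ∀ u v : Fin n, u ≠ v → s(i, i) ≠ s(u, v) := by
      intro u v huv he
      rcases Sym2.eq_iff.1 he with ⟨rfl, rfl⟩ | ⟨rfl, rfl⟩ <;> exact huv rfl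
    simp [sw4, ind, h0, hd a b nab, hd b c nbc, hd c x ncx, hd x a h4]
  · intro i
    simp only [sw4, Finset.sum_add_distrib, Finset.sum_sub_distrib, sum_ind i _ _ nab,
      sum_ind i _ _ nbc, sum_ind i _ _ ncx, sum_ind i _ _ h4]
    ring
  · intro i j hij
    have hv' := hv i j
    simp only [sw4, ind]
    grind
  · have hv' := hv a b
    simp only [sw4, ind]
    grind
  · have hv' := hv b c
    simp only [sw4, ind]
    grind
  · intro i j n1 n2 hij
    have hv' := hv i j
    simp only [sw4, ind]
    grind

lemma sw6_val {L : Matrix (Fin n) (Fin n) ℤ} (hs : ∀ i j, L i j = L j i)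
    {b a x z y c : Fin n} (h : Fwd6 L b a x z y c) (i j : Fin n) :
    (s(i, j) = s(a, b) → L i j = 2) ∧ (s(i, j) = s(b, c) → L i j = -1) ∧
    (s(i, j) = s(c, x) → L i j = 1) ∧ (s(i, j) = s(x, y) → L i j = 0) ∧
    (s(i, j) = s(y, z) → L i j = 1) ∧ (s(i, j) = s(z, a) → L i j = 0) := by
  obtain ⟨⟨h1, h2, -⟩, h3, -, h4, h5, h6, h7, h8⟩ := h
  refine ⟨?_, ?_, ?_, ?_, ?_, ?_⟩ <;> intro he <;> rw [val_of_eq hs he]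
  · exact h1
  · exact h2
  · exact h3
  · exact h6
  · exact h4
  · rw [hs]; exact h8

/-- The two edges of the walk labelled 1 are distinct, and so are the two labelled 0. The other
coincidences among the six edges are excluded by their labels. -/
lemma sw6_distinct {L : Matrix (Fin n) (Fin n) ℤ} (hs : ∀ i j, L i j = L j i)
    (h0 : ∀ i, L i i = 0) {b a x z y c : Fin n} (h : Fwd6 L b a x z y c) :
    s(c, x) ≠ s(y, z) ∧ s(x, y) ≠ s(z, a) := by
  obtain ⟨⟨h1, h2, -⟩, h3, -, h4, h5, h6, h7, h8⟩ := h
  constructor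
  · intro he
    rcases Sym2.eq_iff.1 he with ⟨rfl, rfl⟩ | ⟨rfl, rfl⟩
    · rw [hs] at h6; omega
    · exact h5 rfl
  · intro he
    rcases Sym2.eq_iff.1 he with ⟨rfl, rfl⟩ | ⟨rfl, rfl⟩
    · omega
    · rw [h0] at h4; omega

lemma sw6_reduces {d : Fin n → ℕ} {L : Matrix (Fin n) (Fin n) ℤ} (hE : IsEncoding d L)
    {b a x z y c : Fin n} (h : Fwd6 L b a x z y c) : Reduces L (sw6 L b a x z y c) a b c := by
  have hv := sw6_val hE.1 h
  obtain ⟨k1, k2⟩ := sw6_distinct hE.1 hE.2.1 h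
  obtain ⟨⟨h1, h2, -⟩, h3, -, h4, h5, h6, h7, h8⟩ := h
  have hs := hE.1
  have h0 := hE.2.1
  have nab : a ≠ b := ne_of_val h0 (by omega)
  have nbc : b ≠ c := ne_of_val h0 (by omega)
  have ncx : c ≠ x := ne_of_val h0 (by omega)
  have nyz : y ≠ z := ne_of_val h0 (by omega)
  refine ⟨?_, ?_, ?_, ?_, ?_, ?_, ?_⟩
  · intro i j
    simp only [sw6]
    rw [hs i j, Sym2.eq_swap]
  · intro i
    have hd : ∀ u v : Fin n, u ≠ v → s(i, i) ≠ s(u, v) := by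
      intro u v huv he
      rcases Sym2.eq_iff.1 he with ⟨rfl, rfl⟩ | ⟨rfl, rfl⟩ <;> exact huv rfl
    simp [sw6, ind, h0, hd a b nab, hd b c nbc, hd c x ncx, hd x y h5.symm, hd y z nyz, hd z a h7]
  · intro i
    simp only [sw6, Finset.sum_add_distrib, Finset.sum_sub_distrib, sum_ind i _ _ nab,
      sum_ind i _ _ nbc, sum_ind i _ _ ncx, sum_ind i _ _ h5.symm, sum_ind i _ _ nyz,
      sum_ind i _ _ h7]
    ring
  · intro i j hij
    have hv' := hv i j
    simp only [sw6, ind]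
    grind
  · have hv' := hv a b
    simp only [sw6, ind]
    grind
  · have hv' := hv b c
    simp only [sw6, ind]
    grind
  · intro i j n1 n2 hij
    have hv' := hv i j
    simp only [sw6, ind]
    grind

/-- The shape, seen from the reduced matrix, of a tuple along which `sw4` was applied. -/
def Rev4 (L : Matrix (Fin n) (Fin n) ℤ) (q : ℕ) (b a x : Fin n) : Prop :=
  nl L (-1) b = 1 ∧ L b a = 1 ∧ nl L (-1) a + 1 ≤ q ∧ L a x = 1 ∧ x ≠ b

/-- The shape, seen from the reduced matrix, of a tuple along which `sw6` was applied. -/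
def Rev6 (L : Matrix (Fin n) (Fin n) ℤ) (q : ℕ) (b a x z y : Fin n) : Prop :=
  nl L (-1) b = 1 ∧ L b a = 1 ∧ nl L (-1) a + 1 ≤ q ∧ L a z = 1 ∧ z ≠ b ∧ L x y = 1 ∧
    ((x = a ∧ y ≠ b ∧ y ≠ z) ∨ (L a x = 1 ∧ x ≠ b ∧ x ≠ z ∧ y ≠ a) ∨ (L a x = 2 ∨ L a x = -1))

/-- `b` uses up two of the (−1)-edges, and neither meets `a`. -/
lemma corner_nl_a {d : Fin n → ℕ} {L : Matrix (Fin n) (Fin n) ℤ} (hE : IsEncoding d L)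
    {a b c : Fin n} (hc : Corner L a b c) :
    nl L (-1) a + 2 ≤ (labelEdges L (-1)).ncard := by
  obtain ⟨h1, h2, h3⟩ := hc
  have nab : a ≠ b := ne_of_val hE.2.1 (by omega)
  have := nl_add_le hE.1 hE.2.1 (l := -1) (by norm_num) a
    ((Finset.univ.filter fun w => L b w = -1).image fun w => s(b, w)) (by
      intro e he
      obtain ⟨w, hw, rfl⟩ := Finset.mem_image.1 he
      simp only [Finset.mem_filter, Finset.mem_univ, true_and] at hw
      refine ⟨mem_labelEdges hE.2.1 (by norm_num) hw, ?_⟩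
      rw [Sym2.mem_iff]
      rintro (rfl | rfl)
      · exact nab rfl
      · rw [hE.1] at hw; omega)
  rw [Finset.card_image_of_injective _ (fun w w' h => Sym2.congr_right.1 h)] at this
  unfold nl at h3 this ⊢
  omega

lemma sw4_rev {d : Fin n → ℕ} {L : Matrix (Fin n) (Fin n) ℤ} (hE : IsEncoding d L)
    {b a x c : Fin n} (h : Fwd4 L b a x c) :
    Rev4 (sw4 L b a x c) ((labelEdges L (-1)).ncard - 1) b a x := by
  have hr := sw4_reduces hE h
  have hv := sw4_val hE.1 h
  have ha := corner_nl_a hE h.1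
  have ha' := hr.nl_neg_le hE h.1 a
  refine ⟨hr.nl_neg_b hE h.1, ?_, by omega, ?_, ?_⟩
  · rw [hr.symm]; exact hr.hab
  · have hv' := hv a x
    have := h.2.2.2
    have e : s(a, x) = s(x, a) := Sym2.eq_swap
    simp only [sw4, ind]
    grind
  · rintro rfl
    have := h.2.2.2
    have := h.1.1
    omega

lemma sw6_rev {d : Fin n → ℕ} {L : Matrix (Fin n) (Fin n) ℤ} (hE : IsEncoding d L)
    {b a x z y c : Fin n} (h : Fwd6 L b a x z y c) :
    Rev6 (sw6 L b a x z y c) ((labelEdges L (-1)).ncard - 1) b a x z y := by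
  have hr := sw6_reduces hE h
  have hv := sw6_val hE.1 h
  have hd := sw6_distinct hE.1 hE.2.1 h
  have ha := corner_nl_a hE h.1
  have ha' := hr.nl_neg_le hE h.1 a
  obtain ⟨hc, h3, hx, h4, h5, h6, h7, h8⟩ := h
  refine ⟨hr.nl_neg_b hE hc, ?_, by omega, ?_, ?_, ?_, ?_⟩
  · rw [hr.symm]; exact hr.hab
  · have hv' := hv a z
    have e : s(a, z) = s(z, a) := Sym2.eq_swap
    simp only [sw6, ind]
    grind
  · rintro rfl
    have := hc.1
    omega
  · have hv' := hv x y
    simp only [sw6, ind]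
    grind
  · have h1 := hc.1
    have h2 := hc.2.1
    have hs := hE.1
    have h0 := hE.2.1
    rcases eq_or_ne x a with hxa | hxa
    · left
      refine ⟨hxa, ?_, ?_⟩
      · rintro rfl
        rw [hxa] at h6; omega
      · rintro rfl
        rw [h0] at h4; omega
    · right
      have hax : L a x ≠ 0 := hx.resolve_left hxa
      have nxb : x ≠ b := by
        rintro rfl
        rw [hs] at h3; omega
      have nxz : x ≠ z := by
        rintro rfl
        exact hax h8
      have nya : y ≠ a := by
        rintro rfl
        omega
      have nac : a ≠ c := by
        rintro rfl
        rw [hs] at h1; omega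
      have nxc : x ≠ c := by
        rintro rfl
        rw [h0] at h3; omega
      have hval : sw6 L b a x z y c a x = L a x := by
        simp only [sw6, ind, Sym2.eq_iff]
        grind
      rw [hval]
      rcases hE.2.2.1 a x with h | h | h | h
      · exact Or.inr (Or.inr h)
      · exact absurd h hax
      · exact Or.inl ⟨h, nxb, nxz, nya⟩
      · exact Or.inr (Or.inl h)

/-! ### Reverse switchings -/

section
variable {α β : Type*} [Fintype α] [Fintype β]

lemma card_prod_le {R : α × β → Prop} {k m : ℕ} (P : α → Prop) [DecidablePred R]
    [DecidablePred P]
    (hP : ∀ u v, R (u, v) → P u) (hk : (Finset.univ.filter P).card ≤ k)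
    (hm : ∀ u, P u → (Finset.univ.filter fun v => R (u, v)).card ≤ m) :
    (Finset.univ.filter R).card ≤ k * m := by
  have h1 : (Finset.univ.filter R).card ≤
      ((Finset.univ.filter P).sigma fun u => Finset.univ.filter fun v => R (u, v)).card := by
    apply Finset.card_le_card_of_injOn (fun w => ⟨w.1, w.2⟩)
    · rintro ⟨u, v⟩ h
      simp only [Finset.coe_filter, Finset.mem_univ, true_and, Set.mem_ofPred_eq] at h
      simpa using ⟨hP u v h, h⟩
    · rintro ⟨u, v⟩ _ ⟨u', v'⟩ _ h
      simpa using h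
  rw [Finset.card_sigma] at h1
  refine h1.trans ((Finset.sum_le_card_nsmul _ _ m ?_).trans ?_)
  · intro u hu
    exact hm u (by simpa using hu)
  · exact Nat.mul_le_mul_right m hk

lemma le_card_prod {R : α × β → Prop} {k : ℕ} (S : Finset α) [DecidablePred R]
    (hm : ∀ u ∈ S, k ≤ (Finset.univ.filter fun v => R (u, v)).card) :
    S.card * k ≤ (Finset.univ.filter R).card := by
  have h1 : (S.sigma fun u => Finset.univ.filter fun v => R (u, v)).card ≤
      (Finset.univ.filter R).card := by
    apply Finset.card_le_card_of_injOn (fun w => (w.1, w.2))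
    · rintro ⟨u, v⟩ h
      simp only [Finset.coe_sigma, Set.mem_sigma_iff, Finset.coe_filter, Finset.mem_univ, true_and,
        Set.mem_ofPred_eq] at h
      simpa using h.2
    · rintro ⟨u, v⟩ _ ⟨u', v'⟩ _ h
      simpa using h
  rw [Finset.card_sigma] at h1
  exact (Finset.card_nsmul_le_sum _ _ k hm).trans h1

lemma card_filter_or₃ (P Q R : α → Prop) [DecidablePred P] [DecidablePred Q] [DecidablePred R] :
    (Finset.univ.filter fun u => P u ∨ Q u ∨ R u).card ≤
      (Finset.univ.filter P).card + (Finset.univ.filter Q).card + (Finset.univ.filter R).card := by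
  classical
  rw [Finset.filter_or, Finset.filter_or]
  have h1 := Finset.card_union_le (Finset.univ.filter P)
    (Finset.univ.filter Q ∪ Finset.univ.filter R)
  have h2 := Finset.card_union_le (Finset.univ.filter Q) (Finset.univ.filter R)
  omega

end

lemma card_ne_one (L : Matrix (Fin n) (Fin n) ℤ) (l : ℤ) {v u : Fin n} (h : L v u = l) :
    (Finset.univ.filter fun w => L v w = l ∧ w ≠ u).card + 1 ≤ nl L l v := by
  have : (Finset.univ.filter fun w => L v w = l ∧ w ≠ u) =
      (Finset.univ.filter fun w => L v w = l).erase u := by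
    ext w
    simp [and_comm]
  rw [this, nl, Finset.card_erase_add_one (by simpa using h)]

lemma card_ne_two (L : Matrix (Fin n) (Fin n) ℤ) (l : ℤ) {v u u' : Fin n} (h : L v u = l)
    (h' : L v u' = l) (hne : u' ≠ u) :
    (Finset.univ.filter fun w => L v w = l ∧ w ≠ u ∧ w ≠ u').card + 2 ≤ nl L l v := by
  have h1 := card_ne_one L l h
  have : (Finset.univ.filter fun w => L v w = l ∧ w ≠ u ∧ w ≠ u') =
      (Finset.univ.filter fun w => L v w = l ∧ w ≠ u).erase u' := by
    ext w
    simp only [Finset.mem_filter, Finset.mem_univ, true_and, Finset.mem_erase]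
    tauto
  have h2 : (Finset.univ.filter fun w => L v w = l ∧ w ≠ u ∧ w ≠ u').card + 1 =
      (Finset.univ.filter fun w => L v w = l ∧ w ≠ u).card := by
    rw [this, Finset.card_erase_add_one (by simp [h', hne])]
  omega

section
variable {d : Fin n → ℕ} {L : Matrix (Fin n) (Fin n) ℤ}

lemma nl_le (hE : IsEncoding d L) {l : ℤ} (hl : l ≠ 0) (v : Fin n) :
    nl L l v ≤ (labelEdges L l).ncard := by
  simpa using nl_add_le hE.1 hE.2.1 hl v ∅ (by simp)

lemma nl_one_le (hE : IsEncoding d L) (v : Fin n) : nl L 1 v ≤ dmax d + nl L (-1) v := by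
  have := row_eq hE v
  have := le_dmax d v
  omega

/-- Each (−1)-defect edge has two ends. -/
lemma card_b_le (hE : IsEncoding d L) :
    (Finset.univ.filter fun b => nl L (-1) b = 1).card ≤ 2 * (labelEdges L (-1)).ncard := by
  rw [← sum_nl hE.1 hE.2.1 (l := -1) (by norm_num), Finset.card_filter]
  apply Finset.sum_le_sum
  intro v _
  split_ifs <;> omega

lemma card_rev4 (hE : IsEncoding d L) (hq : (labelEdges L (-1)).ncard ≤ 2) :
    (Finset.univ.filter fun t : Fin n × Fin n × Fin n × Fin n =>
      Rev4 L (labelEdges L (-1)).ncard t.1 t.2.1 t.2.2.1).card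
      ≤ 4 * ((dmax d + 1) * (dmax d * n)) := by
  refine card_prod_le (fun b => nl L (-1) b = 1) (fun b w h => h.1)
    ((card_b_le hE).trans (by omega)) ?_
  intro b hb
  refine card_prod_le (fun a => L b a = 1) (fun a w h => h.2.1) ?_ ?_
  · have := nl_one_le hE b
    rw [hb] at this
    exact this
  intro a ha
  by_cases hna : nl L (-1) a + 1 ≤ (labelEdges L (-1)).ncard
  · refine card_prod_le (fun x => L a x = 1 ∧ x ≠ b) (fun x w h => ⟨h.2.2.2.1, h.2.2.2.2⟩) ?_ ?_
    · have h1 := card_ne_one L 1 (v := a) (u := b) (by rw [hE.1]; exact ha)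
      have h2 := nl_one_le hE a
      omega
    · intro x _
      exact (Finset.card_le_univ _).trans (by simp)
  · have : (Finset.univ.filter fun v : Fin n × Fin n =>
        Rev4 L (labelEdges L (-1)).ncard b a v.1) = ∅ := by
      rw [Finset.filter_eq_empty_iff]
      exact fun w _ h => hna h.2.2.1
    rw [this]
    simp

/-- Counts the tuples `(x, z, y, c)` with `Rev6` for given `b` and `a`, the vertex `c` being free.
The three cases `x = a`, `ax` labelled 1, and `ax` a defect edge are bounded separately. -/
lemma card_rev6_aux (hE : IsEncoding d L) (hD : 3 ≤ dmax d)
    (h2 : (labelEdges L 2).ncard + (labelEdges L (-1)).ncard = 2) {a b : Fin n}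
    (ha : L a b = 1) (hna : nl L (-1) a + 1 ≤ (labelEdges L (-1)).ncard) :
    (Finset.univ.filter fun t : Fin n × Fin n × Fin n × Fin n =>
      L a t.2.1 = 1 ∧ t.2.1 ≠ b ∧ L t.1 t.2.2.1 = 1 ∧
        ((t.1 = a ∧ t.2.2.1 ≠ b ∧ t.2.2.1 ≠ t.2.1) ∨
          (L a t.1 = 1 ∧ t.1 ≠ b ∧ t.1 ≠ t.2.1 ∧ t.2.2.1 ≠ a) ∨
          (L a t.1 = 2 ∨ L a t.1 = -1))).card
      ≤ dmax d ^ 2 * (dmax d + 2) * n := by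
  have e1 : ∀ v, nl L 1 v ≤ dmax d + 2 := by
    intro v
    have := nl_one_le hE v
    have := nl_le hE (l := -1) (by norm_num) v
    omega
  have e2 : nl L 1 a ≤ dmax d + 1 := by
    have := nl_one_le hE a
    omega
  have ez : (Finset.univ.filter fun z => L a z = 1 ∧ z ≠ b).card ≤ dmax d := by
    have := card_ne_one L 1 ha
    omega
  have ec : ∀ s : Finset (Fin n), s.card ≤ n := fun s =>
    (Finset.card_le_univ s).trans (by simp)
  have c1 : (Finset.univ.filter fun t : Fin n × Fin n × Fin n × Fin n =>
      t.1 = a ∧ (L a t.2.1 = 1 ∧ t.2.1 ≠ b) ∧ L a t.2.2.1 = 1 ∧ t.2.2.1 ≠ b ∧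
        t.2.2.1 ≠ t.2.1).card ≤ 1 * (dmax d * ((dmax d - 1) * n)) := by
    refine card_prod_le (fun x => x = a) (fun x w h => h.1) ?_ ?_
    · refine Finset.card_le_one.2 fun u hu v hv => ?_
      rw [Finset.mem_filter] at hu hv
      exact hu.2.trans hv.2.symm
    rintro x hx
    refine card_prod_le (fun z => L a z = 1 ∧ z ≠ b) (fun z w h => h.2.1) ez ?_
    rintro z ⟨hz, hzb⟩
    refine card_prod_le (fun y => L a y = 1 ∧ y ≠ b ∧ y ≠ z) (fun y w h => h.2.2) ?_
      (fun _ _ => ec _)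
    have := card_ne_two L 1 ha hz hzb
    omega
  have c2 : (Finset.univ.filter fun t : Fin n × Fin n × Fin n × Fin n =>
      (L a t.1 = 1 ∧ t.1 ≠ b) ∧ (L a t.2.1 = 1 ∧ t.2.1 ≠ b ∧ t.2.1 ≠ t.1) ∧
        L t.1 t.2.2.1 = 1 ∧ t.2.2.1 ≠ a).card
        ≤ dmax d * ((dmax d - 1) * ((dmax d + 1) * n)) := by
    refine card_prod_le (fun x => L a x = 1 ∧ x ≠ b) (fun x w h => h.1) ez ?_
    rintro x ⟨hx, hxb⟩
    refine card_prod_le (fun z => L a z = 1 ∧ z ≠ b ∧ z ≠ x) (fun z w h => h.2.1) ?_ ?_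
    · have := card_ne_two L 1 ha hx hxb
      omega
    rintro z -
    refine card_prod_le (fun y => L x y = 1 ∧ y ≠ a) (fun y w h => h.2.2) ?_ (fun _ _ => ec _)
    have := card_ne_one L 1 (v := x) (u := a) (by rw [hE.1]; exact hx)
    have := e1 x
    omega
  have c3 : (Finset.univ.filter fun t : Fin n × Fin n × Fin n × Fin n =>
      (L a t.1 = 2 ∨ L a t.1 = -1) ∧ (L a t.2.1 = 1 ∧ t.2.1 ≠ b) ∧ L t.1 t.2.2.1 = 1).card
        ≤ 1 * (dmax d * ((dmax d + 2) * n)) := by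
    refine card_prod_le (fun x => L a x = 2 ∨ L a x = -1) (fun x w h => h.1) ?_ ?_
    · rw [Finset.filter_or]
      refine (Finset.card_union_le _ _).trans ?_
      have := nl_le hE (l := 2) (by norm_num) a
      unfold nl at this hna
      omega
    rintro x -
    refine card_prod_le (fun z => L a z = 1 ∧ z ≠ b) (fun z w h => h.2.1) ez ?_
    rintro z -
    exact card_prod_le (fun y => L x y = 1) (fun y w h => h.2.2) (e1 x) (fun _ _ => ec _)
  have hsub := Finset.card_le_card (Finset.monotone_filter_right
    (Finset.univ : Finset (Fin n × Fin n × Fin n × Fin n))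
    (p := fun t => L a t.2.1 = 1 ∧ t.2.1 ≠ b ∧ L t.1 t.2.2.1 = 1 ∧
        ((t.1 = a ∧ t.2.2.1 ≠ b ∧ t.2.2.1 ≠ t.2.1) ∨
          (L a t.1 = 1 ∧ t.1 ≠ b ∧ t.1 ≠ t.2.1 ∧ t.2.2.1 ≠ a) ∨
          (L a t.1 = 2 ∨ L a t.1 = -1)))
    (q := fun t => (t.1 = a ∧ (L a t.2.1 = 1 ∧ t.2.1 ≠ b) ∧ L a t.2.2.1 = 1 ∧ t.2.2.1 ≠ b ∧
        t.2.2.1 ≠ t.2.1) ∨ ((L a t.1 = 1 ∧ t.1 ≠ b) ∧ (L a t.2.1 = 1 ∧ t.2.1 ≠ b ∧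
        t.2.1 ≠ t.1) ∧ L t.1 t.2.2.1 = 1 ∧ t.2.2.1 ≠ a) ∨ ((L a t.1 = 2 ∨ L a t.1 = -1) ∧
        (L a t.2.1 = 1 ∧ t.2.1 ≠ b) ∧ L t.1 t.2.2.1 = 1)) (by
      rintro ⟨x, z, y, c⟩ - ⟨w1, w2, w3, w4⟩
      rcases w4 with ⟨rfl, w5, w6⟩ | ⟨w5, w6, w7, w8⟩ | w5
      · exact Or.inl ⟨rfl, ⟨w1, w2⟩, w3, w5, w6⟩
      · exact Or.inr (Or.inl ⟨⟨w5, w6⟩, ⟨w1, w2, Ne.symm w7⟩, w3, w8⟩)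
      · exact Or.inr (Or.inr ⟨w5, ⟨w1, w2⟩, w3⟩)))
  refine (hsub.trans (card_filter_or₃ _ _ _)).trans
    ((Nat.add_le_add (Nat.add_le_add c1 c2) c3).trans (le_of_eq ?_))
  obtain ⟨k, hk⟩ : ∃ k, dmax d = k + 1 := ⟨dmax d - 1, by omega⟩
  rw [hk, Nat.add_sub_cancel]
  ring

lemma card_rev6 (hE : IsEncoding d L) (hD : 3 ≤ dmax d)
    (h2 : (labelEdges L 2).ncard + (labelEdges L (-1)).ncard = 2) :
    (Finset.univ.filter fun t : Fin n × Fin n × Fin n × Fin n × Fin n × Fin n =>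
      Rev6 L (labelEdges L (-1)).ncard t.1 t.2.1 t.2.2.1 t.2.2.2.1 t.2.2.2.2.1).card
      ≤ 4 * ((dmax d + 1) * (dmax d ^ 2 * (dmax d + 2) * n)) := by
  refine card_prod_le (fun b => nl L (-1) b = 1) (fun b w h => h.1)
    ((card_b_le hE).trans (by omega)) ?_
  intro b hb
  refine card_prod_le (fun a => L b a = 1) (fun a w h => h.2.1) ?_ ?_
  · have := nl_one_le hE b
    rw [hb] at this
    exact this
  intro a ha
  by_cases hna : nl L (-1) a + 1 ≤ (labelEdges L (-1)).ncard
  · refine le_trans (Finset.card_le_card ?_)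
      (card_rev6_aux hE hD h2 (a := a) (b := b) (by rw [hE.1]; exact ha) hna)
    apply Finset.monotone_filter_right
    exact fun w _ h => h.2.2.2
  · rw [Finset.filter_eq_empty_iff.2 (fun w _ h => hna h.2.2.1)]
    simp

/-! ### Forward switchings -/

/-- A (−1)-neighbour of `b` has at least two neighbours labelled 1; goodness is used when it also
lies on a 2-defect edge. -/
lemma two_le_nl_one (hG : GoodEncoding d L) (hdmin : ∀ v, 1 ≤ d v)
    (hp : (labelEdges L 2).ncard ≤ 2) {a b c : Fin n} (hc : Corner L a b c) :
    2 ≤ nl L 1 c := by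
  have hE := hG.1.1
  obtain ⟨h1, h2, -⟩ := hc
  have hcb : L c b = -1 := by rw [hE.1]; exact h2
  have hneg : 1 ≤ nl L (-1) c := Finset.card_pos.2 ⟨b, by simpa using hcb⟩
  have hrow := row_eq hE c
  have hca : c ≠ a := by rintro rfl; omega
  have nbc : b ≠ c := ne_of_val hE.2.1 (by omega)
  have hp1 := nl_add_le hE.1 hE.2.1 (l := 2) (by norm_num) c {s(a, b)} (by
    intro e he
    rw [Finset.mem_singleton] at he
    subst he
    refine ⟨mem_labelEdges hE.2.1 (by norm_num) h1, ?_⟩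
    rw [Sym2.mem_iff]
    rintro (h | h)
    · exact hca h
    · exact nbc h.symm)
  rw [Finset.card_singleton] at hp1
  rcases Nat.eq_zero_or_pos (nl L 2 c) with h | h
  · have := hdmin c
    omega
  · obtain ⟨w, hw⟩ := Finset.card_pos.1 h
    simp only [Finset.mem_filter, Finset.mem_univ, true_and] at hw
    have nwc : c ≠ w := ne_of_val hE.2.1 (by omega)
    have nwb : w ≠ b := by rintro rfl; omega
    have := hG.2.2.2 w c b nwc.symm nbc.symm nwb (by rw [hE.1]; exact hw) hcb
    omega

/-- At least `M − (2 D² + 7 D + 10)` ordered pairs `(z, y)` labelled 1 complete `a b c x` to a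
closed walk `a b c x y z` that can be switched. -/
lemma good_pairs (hE : IsEncoding d L) (hD : 3 ≤ dmax d) {p q : ℕ}
    (hp : (labelEdges L 2).ncard = p) (hq : (labelEdges L (-1)).ncard = q)
    (h4 : p + q = 4) (hq3 : q ≤ 3) {a b c x : Fin n} (hc : Corner L a b c) (hx : L c x = 1) :
    M d ≤ (Finset.univ.filter fun w : Fin n × Fin n =>
      L w.2 w.1 = 1 ∧ w.2 ≠ x ∧ L x w.2 = 0 ∧ w.1 ≠ a ∧ L a w.1 = 0).card
      + (2 * dmax d ^ 2 + 7 * dmax d + 10) := by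
  have hqa := corner_nl_a hE hc
  obtain ⟨h1, h2, h3⟩ := hc
  have hpa : 1 ≤ nl L 2 a := Finset.card_pos.2 ⟨b, by simpa using h1⟩
  have ncx : c ≠ x := ne_of_val hE.2.1 (by omega)
  have nxb : x ≠ b := by
    rintro rfl
    rw [hE.1] at hx; omega
  have hqx := nl_add_le hE.1 hE.2.1 (l := -1) (by norm_num) x {s(b, c)} (by
    intro e he
    rw [Finset.mem_singleton] at he
    subst he
    refine ⟨mem_labelEdges hE.2.1 (by norm_num) h2, ?_⟩
    rw [Sym2.mem_iff]
    rintro (h | h)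
    · exact nxb h
    · exact ncx h.symm)
  rw [Finset.card_singleton] at hqx
  set Na := Finset.univ.filter fun w => w = a ∨ L a w ≠ 0 with hNa
  set Nx := Finset.univ.filter fun w => w = x ∨ L x w ≠ 0 with hNx
  have ca : Na.card + 4 ≤ dmax d + 2 * q := by
    have h5 := nonzero_card hE a
    have h6 := row_eq hE a
    have h7 := le_dmax d a
    rw [← hNa] at h5
    omega
  have cx : Nx.card + 1 ≤ dmax d + 2 * q := by
    have h5 := nonzero_card hE x
    have h6 := row_eq hE x
    have h7 := le_dmax d x
    rw [← hNx] at h5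
    omega
  have sa := sum_nl_one_le hE Na
  have sx := sum_nl_one_le hE Nx
  have stot := sum_nl_one hE
  rw [← pairs_card L] at sa sx stot
  have hswap : (Finset.univ.filter fun w : Fin n × Fin n => w.2 ∈ Nx ∧ L w.2 w.1 = 1).card ≤
      (Finset.univ.filter fun w : Fin n × Fin n => w.1 ∈ Nx ∧ L w.1 w.2 = 1).card := by
    apply Finset.card_le_card_of_injOn Prod.swap
    · intro w hw
      simpa using hw
    · exact fun w _ w' _ h => Prod.swap_injective h
  have hcover : (Finset.univ.filter fun w : Fin n × Fin n => w.1 ∈ Finset.univ ∧ L w.1 w.2 = 1).card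
      ≤ (Finset.univ.filter fun w : Fin n × Fin n =>
          L w.2 w.1 = 1 ∧ w.2 ≠ x ∧ L x w.2 = 0 ∧ w.1 ≠ a ∧ L a w.1 = 0).card
        + (Finset.univ.filter fun w : Fin n × Fin n => w.1 ∈ Na ∧ L w.1 w.2 = 1).card
        + (Finset.univ.filter fun w : Fin n × Fin n => w.2 ∈ Nx ∧ L w.2 w.1 = 1).card := by
    refine le_trans (Finset.card_le_card ?_) (card_filter_or₃ _ _ _)
    apply Finset.monotone_filter_right
    rintro ⟨z, y⟩ - ⟨-, h⟩
    have h' : L y z = 1 := by rw [hE.1]; exact h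
    simp only [hNa, hNx, Finset.mem_filter, Finset.mem_univ, true_and]
    by_cases hza : z = a ∨ L a z ≠ 0
    · exact Or.inr (Or.inl ⟨hza, h⟩)
    by_cases hyx : y = x ∨ L x y ≠ 0
    · exact Or.inr (Or.inr ⟨hyx, h'⟩)
    push Not at hza hyx
    exact Or.inl ⟨h', hyx.1, hyx.2, hza.1, hza.2⟩
  set G := (Finset.univ.filter fun w : Fin n × Fin n =>
          L w.2 w.1 = 1 ∧ w.2 ≠ x ∧ L x w.2 = 0 ∧ w.1 ≠ a ∧ L a w.1 = 0).card
  have ma : Na.card * dmax d + 4 * dmax d ≤ dmax d ^ 2 + 2 * q * dmax d := by nlinarith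
  have mx : Nx.card * dmax d + dmax d ≤ dmax d ^ 2 + 2 * q * dmax d := by nlinarith
  have hq2 : q = 2 ∨ q = 3 := by omega
  rw [hq] at sa sx stot
  rw [hp] at stot
  rcases hq2 with rfl | rfl
  · obtain rfl : p = 2 := by omega
    omega
  · obtain rfl : p = 1 := by omega
    omega

/-- Each of the (at least two) choices of `x` contributes weight at least `K`, where a switching
along a 4-walk has weight `K` and one along a 6-walk weight `1`. -/
lemma forward_corner (hG : GoodEncoding d L) (hdmin : ∀ v, 1 ≤ d v) (hD : 3 ≤ dmax d) {p q K : ℕ}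
    (hp : (labelEdges L 2).ncard = p) (hq : (labelEdges L (-1)).ncard = q)
    (h4 : p + q = 4) (hq3 : q ≤ 3) (hp2 : p ≤ 2)
    (hK : K + (2 * dmax d ^ 2 + 7 * dmax d + 10) = M d)
    {a b c : Fin n} (hc : Corner L a b c) :
    2 * K ≤ (Finset.univ.filter fun x => Fwd4 L b a x c).card * K +
      (Finset.univ.filter fun t : Fin n × Fin n × Fin n => Fwd6 L b a t.1 t.2.1 t.2.2 c).card := by
  have h1 := two_le_nl_one hG hdmin (hp ▸ hp2) hc
  set X := Finset.univ.filter fun x => L c x = 1 ∧ (x = a ∨ L a x ≠ 0) with hX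
  have h2 : nl L 1 c ≤ (Finset.univ.filter fun x => Fwd4 L b a x c).card + X.card := by
    refine le_trans (Finset.card_le_card ?_) (Finset.card_union_le _ _)
    intro x hx
    simp only [Finset.mem_filter, Finset.mem_univ, true_and] at hx
    simp only [hX, Finset.mem_union, Finset.mem_filter, Finset.mem_univ, true_and]
    by_cases h : x = a ∨ L a x ≠ 0
    · exact Or.inr ⟨hx, h⟩
    · push Not at h
      exact Or.inl ⟨hc, hx, h.1, h.2⟩
  have h3 : X.card * K ≤ (Finset.univ.filter fun t : Fin n × Fin n × Fin n =>
      Fwd6 L b a t.1 t.2.1 t.2.2 c).card := by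
    apply le_card_prod
    intro x hx
    simp only [hX, Finset.mem_filter, Finset.mem_univ, true_and] at hx
    have h5 := good_pairs hG.1.1 hD hp hq h4 hq3 hc hx.1
    have h6 : K ≤ (Finset.univ.filter fun w : Fin n × Fin n =>
        L w.2 w.1 = 1 ∧ w.2 ≠ x ∧ L x w.2 = 0 ∧ w.1 ≠ a ∧ L a w.1 = 0).card := by omega
    refine h6.trans (Finset.card_le_card ?_)
    · apply Finset.monotone_filter_right
      exact fun w _ h => ⟨hc, hx.1, hx.2, h⟩
  calc 2 * K ≤ ((Finset.univ.filter fun x => Fwd4 L b a x c).card + X.card) * K :=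
        Nat.mul_le_mul_right K (h1.trans h2)
    _ ≤ _ := by rw [Nat.add_mul]; omega

lemma forward_total (hG : GoodEncoding d L) (hdmin : ∀ v, 1 ≤ d v) (hD : 3 ≤ dmax d) {p q K : ℕ}
    (hp : (labelEdges L 2).ncard = p) (hq : (labelEdges L (-1)).ncard = q)
    (h4 : p + q = 4) (hq3 : q ≤ 3) (hp2 : p ≤ 2)
    (hK : K + (2 * dmax d ^ 2 + 7 * dmax d + 10) = M d) :
    4 * K ≤ (Finset.univ.filter fun t : Fin n × Fin n × Fin n × Fin n =>
        Fwd4 L t.1 t.2.1 t.2.2.1 t.2.2.2).card * K +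
      (Finset.univ.filter fun t : Fin n × Fin n × Fin n × Fin n × Fin n × Fin n =>
        Fwd6 L t.1 t.2.1 t.2.2.1 t.2.2.2.1 t.2.2.2.2.1 t.2.2.2.2.2).card := by
  obtain ⟨a, b, c, c', hne, hc, hc'⟩ := exists_corners hG.1 (by omega)
  have f1 := forward_corner hG hdmin hD hp hq h4 hq3 hp2 hK hc
  have f2 := forward_corner hG hdmin hD hp hq h4 hq3 hp2 hK hc'
  have g4 : (Finset.univ.filter fun x => Fwd4 L b a x c).card +
      (Finset.univ.filter fun x => Fwd4 L b a x c').card ≤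
      (Finset.univ.filter fun t : Fin n × Fin n × Fin n × Fin n =>
        Fwd4 L t.1 t.2.1 t.2.2.1 t.2.2.2).card := by
    rw [← Finset.sum_pair (f := fun c => (Finset.univ.filter fun x => Fwd4 L b a x c).card) hne,
      ← Finset.card_sigma]
    apply Finset.card_le_card_of_injOn (fun w => (b, a, w.2, w.1))
    · rintro ⟨u, x⟩ h
      simp only [Finset.coe_sigma, Set.mem_sigma_iff, Finset.coe_filter, Finset.mem_univ, true_and,
        Set.mem_ofPred_eq] at h
      simpa using h.2
    · rintro ⟨u, x⟩ _ ⟨u', x'⟩ _ h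
      simp only [Prod.mk.injEq, true_and] at h
      rw [h.1, h.2]
  have g6 : (Finset.univ.filter fun t : Fin n × Fin n × Fin n =>
        Fwd6 L b a t.1 t.2.1 t.2.2 c).card +
      (Finset.univ.filter fun t : Fin n × Fin n × Fin n =>
        Fwd6 L b a t.1 t.2.1 t.2.2 c').card ≤
      (Finset.univ.filter fun t : Fin n × Fin n × Fin n × Fin n × Fin n × Fin n =>
        Fwd6 L t.1 t.2.1 t.2.2.1 t.2.2.2.1 t.2.2.2.2.1 t.2.2.2.2.2).card := by
    rw [← Finset.sum_pair (f := fun c => (Finset.univ.filter fun t : Fin n × Fin n × Fin n =>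
        Fwd6 L b a t.1 t.2.1 t.2.2 c).card) hne, ← Finset.card_sigma]
    apply Finset.card_le_card_of_injOn (fun w => (b, a, w.2.1, w.2.2.1, w.2.2.2, w.1))
    · rintro ⟨u, x⟩ h
      simp only [Finset.coe_sigma, Set.mem_sigma_iff, Finset.coe_filter, Finset.mem_univ, true_and,
        Set.mem_ofPred_eq] at h
      simpa using h.2
    · rintro ⟨u, x, z, y⟩ _ ⟨u', x', z', y'⟩ _ h
      simp only [Prod.mk.injEq, true_and] at h
      obtain ⟨rfl, rfl, rfl, rfl⟩ := h
      rfl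
  nlinarith [Nat.mul_le_mul_right K g4]

end

/-! ### Double counting -/

/-- If every `L ∈ C` and `t ∈ F L` give a switched `φ t L ∈ C'` with `t ∈ R (φ t L)`, and `L` can be
recovered from `t` and `φ t L`, then the number of forward pairs is at most that of reverse ones. -/
lemma double_count {α τ : Type*} (C C' : Finset α) (F R : α → Finset τ) (φ : τ → α → α) (k : ℕ)
    (hφ : ∀ L ∈ C, ∀ t ∈ F L, φ t L ∈ C' ∧ t ∈ R (φ t L))
    (hinj : ∀ t, Function.Injective (φ t)) (hR : ∀ L ∈ C', (R L).card ≤ k) :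
    ∑ L ∈ C, (F L).card ≤ C'.card * k := by
  rw [← Finset.card_sigma]
  have h1 : (C.sigma F).card ≤ (C'.sigma R).card := by
    apply Finset.card_le_card_of_injOn (fun w => ⟨φ w.2 w.1, w.2⟩)
    · rintro ⟨L, t⟩ h
      simp only [Finset.coe_sigma, Set.mem_sigma_iff, Finset.mem_coe] at h ⊢
      exact hφ L h.1 t h.2
    · rintro ⟨L, t⟩ _ ⟨L', t'⟩ _ h
      simp only [Sigma.mk.injEq, heq_eq_eq] at h
      obtain ⟨h1, rfl⟩ := h
      rw [hinj t h1]
  refine h1.trans ?_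
  rw [Finset.card_sigma]
  exact Finset.sum_le_card_nsmul _ _ _ hR

lemma sw4_injective (b a x c : Fin n) : Function.Injective fun L => sw4 L b a x c := by
  intro L L' h
  ext i j
  have := congrFun (congrFun h i) j
  simp only [sw4] at this
  linarith

lemma sw6_injective (b a x z y c : Fin n) : Function.Injective fun L => sw6 L b a x z y c := by
  intro L L' h
  ext i j
  have := congrFun (congrFun h i) j
  simp only [sw6] at this
  linarith

lemma Cset_finite (d : Fin n → ℕ) (Z : SimpleGraph (Fin n)) (p q : ℕ) : (Cset d Z p q).Finite := by
  have h1 : (Set.univ.pi fun _ : Fin n => Set.univ.pi fun _ : Fin n =>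
      (Set.Icc (-1) 2 : Set ℤ)).Finite :=
    Set.Finite.pi fun _ => Set.Finite.pi fun _ => Set.finite_Icc _ _
  refine h1.subset ?_
  intro L hL i _ j _
  rcases hL.1.1.1.2.2.1 i j with h | h | h | h <;> simp [h]

/-- Phase 1 bound: for `p + q = 4` with `p ∈ {1,2}`,
`|C(p,q)| ≤ 2 d_max² M |C(p−1, q−1)|`. -/
theorem phase1_bound
    (d : Fin n → ℕ) (hgraphical : (Omega d).Nonempty)
    (hdmin : ∀ v, 1 ≤ d v)
    (hdmax3 : 3 ≤ dmax d)
    (hdmaxM : (dmax d : ℝ) ≤ (1 / 3) * Real.sqrt (M d))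
    (Z : SimpleGraph (Fin n)) (hZ : Z ∈ Omega d) :
    ∀ p q : ℕ, p + q = 4 → (p = 1 ∨ p = 2) → (q = 2 ∨ q = 3) →
      (Cset d Z p q).ncard ≤ 2 * dmax d ^ 2 * M d * (Cset d Z (p - 1) (q - 1)).ncard := by
  intro p q h4 hp hq
  have hM : 9 * dmax d ^ 2 ≤ M d := by
    have h1 : 3 * (dmax d : ℝ) ≤ Real.sqrt (M d) := by linarith
    have h2 := Real.sq_sqrt (Nat.cast_nonneg (α := ℝ) (M d))
    have h3 : (9 * dmax d ^ 2 : ℝ) ≤ M d := by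
      rw [← h2]
      nlinarith [Nat.cast_nonneg (α := ℝ) (dmax d)]
    exact_mod_cast h3
  have hn : n ≤ M d := by
    have := Finset.sum_le_sum fun v (_ : v ∈ Finset.univ) => hdmin v
    simpa [M] using this
  set D := dmax d with hDdef
  obtain ⟨K, hK⟩ : ∃ K, K + (2 * D ^ 2 + 7 * D + 10) = M d :=
    ⟨M d - (2 * D ^ 2 + 7 * D + 10), Nat.sub_add_cancel (by nlinarith)⟩
  set C := (Cset_finite d Z p q).toFinset with hC
  set C' := (Cset_finite d Z (p - 1) (q - 1)).toFinset with hC'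
  rw [Set.ncard_eq_toFinset_card _ (Cset_finite d Z p q),
    Set.ncard_eq_toFinset_card _ (Cset_finite d Z (p - 1) (q - 1)), ← hC, ← hC']
  have mC : ∀ L, L ∈ C ↔ L ∈ Cset d Z p q := fun L => Set.Finite.mem_toFinset _
  have mC' : ∀ L, L ∈ C' ↔ L ∈ Cset d Z (p - 1) (q - 1) := fun L => Set.Finite.mem_toFinset _
  have t4 := double_count C C'
    (fun L => Finset.univ.filter fun t : Fin n × Fin n × Fin n × Fin n =>
      Fwd4 L t.1 t.2.1 t.2.2.1 t.2.2.2)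
    (fun L => Finset.univ.filter fun t : Fin n × Fin n × Fin n × Fin n =>
      Rev4 L (labelEdges L (-1)).ncard t.1 t.2.1 t.2.2.1)
    (fun t L => sw4 L t.1 t.2.1 t.2.2.1 t.2.2.2) (4 * ((D + 1) * (D * n)))
    (by
      rintro L hL ⟨b, a, x, c⟩ ht
      rw [mC] at hL
      simp only [Finset.mem_filter, Finset.mem_univ, true_and] at ht ⊢
      have hE := hL.1.1.1
      have hm := (sw4_reduces hE ht).mem ht.1 hL
      refine ⟨(mC' _).2 hm, ?_⟩
      rw [hm.2.2.2, ← hL.2.2.2]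
      exact sw4_rev hE ht)
    (fun t => sw4_injective _ _ _ _)
    (fun L hL => card_rev4 ((mC' L).1 hL).1.1.1 (by rw [((mC' L).1 hL).2.2.2]; omega))
  have t6 := double_count C C'
    (fun L => Finset.univ.filter fun t : Fin n × Fin n × Fin n × Fin n × Fin n × Fin n =>
      Fwd6 L t.1 t.2.1 t.2.2.1 t.2.2.2.1 t.2.2.2.2.1 t.2.2.2.2.2)
    (fun L => Finset.univ.filter fun t : Fin n × Fin n × Fin n × Fin n × Fin n × Fin n =>
      Rev6 L (labelEdges L (-1)).ncard t.1 t.2.1 t.2.2.1 t.2.2.2.1 t.2.2.2.2.1)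
    (fun t L => sw6 L t.1 t.2.1 t.2.2.1 t.2.2.2.1 t.2.2.2.2.1 t.2.2.2.2.2)
    (4 * ((D + 1) * (D ^ 2 * (D + 2) * n)))
    (by
      rintro L hL ⟨b, a, x, z, y, c⟩ ht
      rw [mC] at hL
      simp only [Finset.mem_filter, Finset.mem_univ, true_and] at ht ⊢
      have hE := hL.1.1.1
      have hm := (sw6_reduces hE ht).mem ht.1 hL
      refine ⟨(mC' _).2 hm, ?_⟩
      rw [hm.2.2.2, ← hL.2.2.2]
      exact sw6_rev hE ht)
    (fun t => sw6_injective _ _ _ _ _ _)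
    (fun L hL => card_rev6 ((mC' L).1 hL).1.1.1 hdmax3
      (by rw [((mC' L).1 hL).2.2.2, ((mC' L).1 hL).2.2.1]; omega))
  have hfwd : C.card * (4 * K) ≤
      (∑ L ∈ C, (Finset.univ.filter fun t : Fin n × Fin n × Fin n × Fin n =>
        Fwd4 L t.1 t.2.1 t.2.2.1 t.2.2.2).card) * K +
      ∑ L ∈ C, (Finset.univ.filter fun t : Fin n × Fin n × Fin n × Fin n × Fin n × Fin n =>
        Fwd6 L t.1 t.2.1 t.2.2.1 t.2.2.2.1 t.2.2.2.2.1 t.2.2.2.2.2).card := by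
    rw [Finset.sum_mul, ← Finset.sum_add_distrib]
    refine Finset.card_nsmul_le_sum _ _ _ fun L hL => ?_
    have hL' := (mC L).1 hL
    exact forward_total hL'.1 hdmin hdmax3 hL'.2.2.1 hL'.2.2.2 h4 (by omega) (by omega) hK
  have hKpos : 0 < K := by nlinarith
  -- The weight of the reverse switchings; the lower bound `K ≥ 7D² - 7D - 10` enters here.
  have harith : (D + 1) * D * K + (D + 1) * (D ^ 2 * (D + 2)) ≤ 2 * D ^ 2 * K := by
    obtain ⟨k, hk⟩ : ∃ k, D = k + 3 := ⟨D - 3, by omega⟩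
    have hK7 : 7 * D ^ 2 ≤ K + 7 * D + 10 := by omega
    rw [hk] at hK7 ⊢
    have hK8 : 7 * k ^ 2 + 35 * k + 32 ≤ K := by nlinarith
    have := Nat.mul_le_mul_left ((k + 3) * (k + 2)) hK8
    nlinarith [Nat.zero_le (k ^ 4), Nat.zero_le (k ^ 3), Nat.zero_le (k ^ 2)]
  have hmain : C.card * (4 * K) ≤ (C'.card * (2 * D ^ 2 * n)) * (4 * K) := by
    calc C.card * (4 * K) ≤ (C'.card * (4 * ((D + 1) * (D * n)))) * K
          + C'.card * (4 * ((D + 1) * (D ^ 2 * (D + 2) * n))) :=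
          hfwd.trans (Nat.add_le_add (Nat.mul_le_mul_right K t4) t6)
      _ = (4 * C'.card * n) * ((D + 1) * D * K + (D + 1) * (D ^ 2 * (D + 2))) := by ring
      _ ≤ (4 * C'.card * n) * (2 * D ^ 2 * K) := Nat.mul_le_mul_left _ harith
      _ = _ := by ring
  have hfin : C.card ≤ C'.card * (2 * D ^ 2 * n) := Nat.le_of_mul_le_mul_right hmain (by omega)
  calc C.card ≤ C'.card * (2 * D ^ 2 * n) := hfin
    _ ≤ C'.card * (2 * D ^ 2 * M d) :=
        Nat.mul_le_mul_left _ (Nat.mul_le_mul_left _ hn)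
    _ = _ := by ring

end SwitchChain
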